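/- Let X and Y be topological spaces with X Hausdorff, let Φ : X → Y be a continuous map, and let U, V be open subsets of X with U connected and U ∩ V ≠ ∅. Assume the restriction of Φ to V is an open map into Y (so Φ(V) is open in Y) and that Φ : V → Φ(V) is a proper map. Then U ⊆ V if and only if Φ(U) ⊆ Φ(V). -/

import Mathlib

open Filter Set Topology Asymptotics

noncomputable section

/-!
A limit of points of `V` whose image stays in `Φ(V)` is, by properness of `Φ : V → Φ(V)`,
inseparable from some point of `V`, and so lies in the open set `V`. If `Φ(U) ⊆ Φ(V)`, the set `V`
is therefore both open and closed relative to the connected set `U`, which it meets.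
-/

section ProperRestriction

variable {X Y : Type*} [TopologicalSpace X] [TopologicalSpace Y] [R1Space X]

theorem exists_inseparable_of_mem_closure_of_isProperMap_restrict {f : X → Y} {s : Set X}
    {t : Set Y} {hst : MapsTo f s t} (hproper : IsProperMap (hst.restrict f s t)) {x : X}
    (hf : ContinuousWithinAt f s x) (hxs : x ∈ closure s) (hxt : f x ∈ t) :
    ∃ v ∈ s, Inseparable v x := by
  let ℱ : Filter s := comap (↑) (𝓝 x)
  have : ℱ.NeBot := mem_closure_iff_comap_neBot.mp hxs
  have h_val : Tendsto ((↑) : s → X) ℱ (𝓝 x) := tendsto_comap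
  have h_lim : Tendsto (hst.restrict f s t) ℱ (𝓝 ⟨f x, hxt⟩) :=
    tendsto_subtype_rng.mpr <| hf.tendsto.comp <|
      tendsto_nhdsWithin_iff.mpr ⟨h_val, .of_forall Subtype.property⟩
  obtain ⟨v, -, hv⟩ := hproper.clusterPt_of_mapClusterPt h_lim.mapClusterPt
  have : (𝓝 (v : X) ⊓ 𝓝 x).NeBot :=
    (hv.map continuous_subtype_val.continuousAt h_val).neBot
  exact ⟨v, v.property, tendsto_nhds_unique_inseparable (tendsto_id'.mpr inf_le_left)
    (tendsto_id'.mpr inf_le_right)⟩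

theorem subset_iff_image_subset_general {Φ : X → Y} {U V : Set X}
    (hΦ : ContinuousOn Φ (U ∪ V)) (hV : IsOpen V) (hU : IsPreconnected U)
    (hUV : (U ∩ V).Nonempty)
    (hproper : IsProperMap ((mapsTo_image Φ V).restrict Φ V (Φ '' V))) :
    U ⊆ V ↔ Φ '' U ⊆ Φ '' V := by
  refine ⟨image_mono, fun h_image => hU.subset_of_closure_inter_subset hV hUV ?_⟩
  rintro x ⟨hx_closure, hxU⟩
  have hΦx : ContinuousWithinAt Φ V x := (hΦ x (.inl hxU)).mono subset_union_right
  obtain ⟨v, hvV, hvx⟩ := exists_inseparable_of_mem_closure_of_isProperMap_restrict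
    hproper hΦx hx_closure (h_image (mem_image_of_mem Φ hxU))
  exact (hvx.mem_open_iff hV).mp hvV

end ProperRestriction

/-- Let `Φ : X → Y` be continuous with `X` Hausdorff, `U, V` open,
`U` connected and `U ∩ V ≠ ∅`. If `Φ` restricted to `V` is open and
`Φ : V → Φ(V)` is proper, then `U ⊆ V ↔ Φ(U) ⊆ Φ(V)`. -/
theorem subset_iff_image_subset
    {X Y : Type*} [TopologicalSpace X] [TopologicalSpace Y] [T2Space X]
    (Φ : X → Y) (hΦ : Continuous Φ) (U V : Set X)
    (hU : IsOpen U) (hV : IsOpen V) (hUconn : IsConnected U)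
    (hUV : (U ∩ V).Nonempty)
    (hopen : ∀ s : Set X, IsOpen s → s ⊆ V → IsOpen (Φ '' s))
    (hproper : IsProperMap (Set.MapsTo.restrict Φ V (Φ '' V) (Set.mapsTo_image Φ V))) :
    U ⊆ V ↔ Φ '' U ⊆ Φ '' V :=
  subset_iff_image_subset_general hΦ.continuousOn hV hUconn.isPreconnected hUV hproper

end
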